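/- Let p ∈ (0,2) and let γ_p(t) = ∫_ℝ e^{-|z|^p} e^{-itz} dz. Then: (i) γ_p is positive and the function t ↦ log γ_p(√t) is convex on (0,∞); (ii) equivalently, the function t ↦ γ_p'(t)/(t γ_p(t)) is increasing on (0,∞); and (iii) for all natural numbers k < m and every t > 0, γ_p(t/√k)^k · γ_p(0)^{m-k} ≥ γ_p(t/√m)^m. -/

import Mathlib

open scoped Real

noncomputable section

/-- `γ_p`, the Fourier transform of `z ↦ exp(-|z|^p)` on `ℝ` (a real even function). -/
def gammaP (p t : ℝ) : ℝ :=
  ∫ z : ℝ, Real.exp (-|z| ^ p) * Real.cos (t * z)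

open MeasureTheory Filter Topology

/-- cosine transform -/
def GG (f : ℝ → ℝ) (t : ℝ) : ℝ := ∫ z : ℝ, f z * Real.cos (t * z)

/-- nonnegative and log-convex in the square variable, in linear form -/
def Good (f : ℝ → ℝ) : Prop :=
  (∀ t, 0 ≤ GG f t) ∧
    ∀ c : ℝ, ConvexOn ℝ (Set.Ici 0) (fun t => Real.exp (c * t) * GG f (Real.sqrt t))

lemma integrable_mul_cos {f : ℝ → ℝ} (hf : Integrable f) (t : ℝ) :
    Integrable (fun z => f z * Real.cos (t * z)) := by
  refine hf.mono (hf.aestronglyMeasurable.mul (by fun_prop)) (Eventually.of_forall fun z => ?_)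
  rw [norm_mul]
  exact mul_le_of_le_one_right (norm_nonneg _) (Real.abs_cos_le_one _)

lemma Good.add {f g : ℝ → ℝ} (hf : Good f) (hg : Good g) (hfi : Integrable f)
    (hgi : Integrable g) : Good (fun z => f z + g z) := by
  have h : ∀ t, GG (fun z => f z + g z) t = GG f t + GG g t := by
    intro t
    simp only [GG, add_mul]
    exact integral_add (integrable_mul_cos hfi t) (integrable_mul_cos hgi t)
  refine ⟨fun t => by rw [h]; exact add_nonneg (hf.1 t) (hg.1 t), fun c => ?_⟩
  simp only [h, mul_add]
  exact (hf.2 c).add (hg.2 c)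

lemma Good.smul {f : ℝ → ℝ} (hf : Good f) {a : ℝ} (ha : 0 ≤ a) : Good (fun z => a * f z) := by
  have h : ∀ t, GG (fun z => a * f z) t = a * GG f t := by
    intro t
    simp only [GG, mul_assoc]
    exact integral_const_mul _ _
  refine ⟨fun t => by rw [h]; exact mul_nonneg ha (hf.1 t), fun c => ?_⟩
  simp only [h]
  have := (hf.2 c).smul ha
  refine this.congr fun t _ => ?_
  simp only [smul_eq_mul]
  ring

lemma Good.zero : Good (fun _ => 0) := by
  refine ⟨fun t => by simp [GG], fun c => ?_⟩
  simp only [GG, zero_mul, integral_zero, mul_zero]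
  exact convexOn_const _ (convex_Ici _)

lemma Good.gauss {s : ℝ} (hs : 0 < s) : Good (fun z => Real.exp (-s * z ^ 2)) := by
  have h : ∀ t, GG (fun z => Real.exp (-s * z ^ 2)) t
      = Real.sqrt (π / s) * Real.exp (-t ^ 2 / (4 * s)) := by
    intro t
    have h1 := fourierIntegral_gaussian (b := (s : ℂ)) (by simpa using hs) (t : ℂ)
    have hint : Integrable (fun x : ℝ =>
        Complex.exp (Complex.I * t * x) * Complex.exp (-(s:ℂ) * x ^ 2)) := by
      have := integrable_cexp_quadratic (b := (s : ℂ)) (by simpa using hs) (Complex.I * t) 0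
      refine this.congr (Eventually.of_forall fun x => ?_)
      simp only [← Complex.exp_add]
      ring_nf
    have h2 := congrArg Complex.re h1
    have h3 : (∫ x : ℝ, Complex.exp (Complex.I * t * x) * Complex.exp (-(s:ℂ) * x ^ 2)).re
        = ∫ x : ℝ, (Complex.exp (Complex.I * t * x) * Complex.exp (-(s:ℂ) * x ^ 2)).re :=
      (integral_re hint).symm
    rw [h3] at h2
    have h4 : ((π / s : ℂ) ^ (1 / 2 : ℂ) * Complex.exp (-(t:ℂ) ^ 2 / (4 * s)))
        = ((Real.sqrt (π / s) * Real.exp (-t ^ 2 / (4 * s)) : ℝ) : ℂ) := by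
      rw [Real.sqrt_eq_rpow]
      push_cast
      rw [Complex.ofReal_cpow (by positivity)]
      push_cast
      rfl
    rw [h4, Complex.ofReal_re] at h2
    rw [← h2]
    unfold GG
    refine integral_congr_ae (Eventually.of_forall fun x => ?_)
    have e1 : Complex.exp (-(s:ℂ) * x ^ 2) = ((Real.exp (-s * x ^ 2) : ℝ) : ℂ) := by
      push_cast; rfl
    have e2 : Complex.exp (Complex.I * t * x) = Complex.exp (((t * x : ℝ) : ℂ) * Complex.I) := by
      push_cast; ring_nf
    simp only [e1, e2]
    rw [Complex.re_mul_ofReal, Complex.exp_ofReal_mul_I_re, mul_comm]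
  refine ⟨fun t => by rw [h]; positivity, fun c => ?_⟩
  have hc : ConvexOn ℝ (Set.Ici 0) (fun t : ℝ => Real.exp ((c - 1 / (4 * s)) * t)) := by
    have := (convexOn_exp.comp_linearMap (LinearMap.mul ℝ ℝ (c - 1 / (4 * s))))
    exact (this.subset (Set.subset_univ _) (convex_Ici _))
  refine (hc.smul (Real.sqrt_nonneg (π / s))).congr fun t ht => ?_
  simp only [h, smul_eq_mul]
  rw [Real.sq_sqrt ht, mul_left_comm, ← Real.exp_add]
  congr 2
  ring

lemma Good.lim {F : ℕ → ℝ → ℝ} {f g : ℝ → ℝ} (hF : ∀ n, Good (F n))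
    (hm : ∀ n, AEStronglyMeasurable (F n) volume) (hg : Integrable g)
    (hb : ∀ n, ∀ z ≠ 0, |F n z| ≤ g z)
    (hl : ∀ z ≠ 0, Tendsto (fun n => F n z) atTop (𝓝 (f z))) : Good f := by
  have hae : ∀ᵐ z : ℝ, z ≠ 0 := by simp [ae_iff]
  have h : ∀ t, Tendsto (fun n => GG (F n) t) atTop (𝓝 (GG f t)) := by
    intro t
    refine tendsto_integral_of_dominated_convergence g
      (fun n => (hm n).mul (by fun_prop)) hg (fun n => ?_) ?_
    · filter_upwards [hae] with z hz
      rw [norm_mul]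
      exact (mul_le_of_le_one_right (norm_nonneg _) (Real.abs_cos_le_one _)).trans (hb n z hz)
    · filter_upwards [hae] with z hz
      exact (hl z hz).mul_const _
  refine ⟨fun t => ge_of_tendsto' (h t) fun n => (hF n).1 t, fun c => ⟨convex_Ici _, ?_⟩⟩
  intro x hx y hy a b ha hb hab
  have h' : ∀ t, Tendsto (fun n => Real.exp (c * t) * GG (F n) (√t)) atTop
      (𝓝 (Real.exp (c * t) * GG f (√t))) := fun t => (h _).const_mul _
  exact le_of_tendsto_of_tendsto' (h' _) (((h' x).const_smul a).add ((h' y).const_smul b))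
    fun n => ((hF n).2 c).2 hx hy ha hb hab

/-- nonnegative polynomials in a Gaussian, damped -/
lemma Good.poly (q : Polynomial ℝ) (hq : ∀ k, 0 ≤ q.coeff k) {h δ : ℝ} (hh : 0 < h)
    (hδ : 0 < δ) :
    Good (fun z => q.eval (Real.exp (-h * z ^ 2)) * Real.exp (-δ * z ^ 2)) := by
  have key : ∀ S : Finset ℕ,
      Good (fun z => ∑ k ∈ S, q.coeff k * Real.exp (-(k * h + δ) * z ^ 2)) ∧
      Integrable (fun z => ∑ k ∈ S, q.coeff k * Real.exp (-(k * h + δ) * z ^ 2)) := by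
    intro S
    induction S using Finset.induction_on with
    | empty => simpa using Good.zero
    | insert k S hk ih =>
      simp only [Finset.sum_insert hk]
      have hp : 0 < k * h + δ := by positivity
      have hi := (integrable_exp_neg_mul_sq hp).const_mul (q.coeff k)
      exact ⟨((Good.gauss hp).smul (hq k)).add ih.1 hi ih.2, hi.add ih.2⟩
  convert (key (Finset.range (q.natDegree + 1))).1 using 2 with z
  rw [Polynomial.eval_eq_sum_range, Finset.sum_mul]
  refine Finset.sum_congr rfl fun k _ => ?_
  rw [← Real.exp_nat_mul, mul_assoc, ← Real.exp_add]
  ring_nf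

lemma coeff_pow_nonneg {q : Polynomial ℝ} (hq : ∀ k, 0 ≤ q.coeff k) (n : ℕ) :
    ∀ k, 0 ≤ (q ^ n).coeff k := by
  induction n with
  | zero => intro k; rw [pow_zero, Polynomial.coeff_one]; split_ifs <;> norm_num
  | succ n ih =>
    intro k
    rw [pow_succ, Polynomial.coeff_mul]
    exact Finset.sum_nonneg fun x _ => mul_nonneg (ih _) (hq _)

lemma choose_sign {α : ℝ} (h0 : 0 < α) (h1 : α < 1) (k : ℕ) :
    0 ≤ -(Ring.choose α (k + 1) * (-1) ^ (k + 1)) := by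
  induction k with
  | zero => simp [h0.le]
  | succ k ih =>
    have : Ring.choose α (k + 2) * (k + 2) = Ring.choose α (k + 1) * (α - (k + 1)) := by
      have := Ring.choose_smul_choose α (show k + 1 ≤ k + 2 by omega)
      rw [show k + 2 - (k + 1) = 1 by omega, Ring.choose_one_right, Nat.choose_succ_self_right,
        nsmul_eq_mul] at this
      push_cast at this
      rw [← this]; ring
    have e : Ring.choose α (k + 2) = Ring.choose α (k + 1) * (α - (k + 1)) / (k + 2) := by
      rw [← this]; field_simp
    have : 0 ≤ -(Ring.choose α (k + 1) * (-1) ^ (k + 1)) * (((k + 1) - α) / (k + 2)) :=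
      mul_nonneg ih (div_nonneg (by have : (0:ℝ) ≤ k := by positivity
                                    linarith) (by positivity))
    rw [show k + 1 + 1 = k + 2 from rfl, e]
    convert this using 1
    ring

lemma exists_poly {α : ℝ} (h0 : 0 < α) (h1 : α < 1) :
    ∃ q : ℕ → Polynomial ℝ, (∀ N k, 0 ≤ (q N).coeff k) ∧
      (∀ N, ∀ x, 0 < x → x < 1 → 0 ≤ (q N).eval x ∧ (q N).eval x ≤ 1) ∧
      (∀ x, 0 < x → x < 1 → Tendsto (fun N => (q N).eval x) atTop (𝓝 (1 - (1 - x) ^ α))) := by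
  set a : ℕ → ℝ := fun k => -(Ring.choose α (k + 1) * (-1) ^ (k + 1)) with ha
  have hs : ∀ x : ℝ, 0 < x → x < 1 → HasSum (fun k => a k * x ^ (k + 1)) (1 - (1 - x) ^ α) := by
    intro x hx hx1
    have := (Real.one_add_rpow_hasFPowerSeriesOnBall_zero (a := α)).hasSum (y := -x)
      (by simpa [← ofReal_norm, abs_of_pos hx] using hx1)
    simp only [zero_add, binomialSeries_apply] at this
    have h2 := (hasSum_nat_add_iff' 1).2 this
    simp only [List.ofFn_const, List.prod_replicate, smul_eq_mul, Finset.range_one,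
      Finset.sum_singleton, Ring.choose_zero_right, pow_zero, mul_one] at h2
    have h3 := h2.neg
    rw [show -((1 + -x) ^ α - 1) = 1 - (1 - x) ^ α by rw [← sub_eq_add_neg]; ring] at h3
    have e : (fun k => a k * x ^ (k + 1))
        = fun n => -(Ring.choose α (n + 1) * (-x) ^ (n + 1)) := by
      funext k
      rw [neg_pow x]
      simp only [ha]
      ring
    rw [e]
    exact h3
  refine ⟨fun N => ∑ k ∈ Finset.range N, Polynomial.C (a k) * Polynomial.X ^ (k + 1), ?_, ?_, ?_⟩
  · intro N k
    rw [Polynomial.finsetSum_coeff]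
    refine Finset.sum_nonneg fun j _ => ?_
    rw [Polynomial.coeff_C_mul_X_pow]
    split_ifs
    · exact choose_sign h0 h1 j
    · exact le_rfl
  · intro N x hx hx1
    simp only [Polynomial.eval_finsetSum, Polynomial.eval_mul, Polynomial.eval_C,
      Polynomial.eval_pow, Polynomial.eval_X]
    have hnn : ∀ k, 0 ≤ a k * x ^ (k + 1) := fun k =>
      mul_nonneg (choose_sign h0 h1 k) (by positivity)
    refine ⟨Finset.sum_nonneg fun k _ => hnn k, ?_⟩
    have := sum_le_hasSum (Finset.range N) (fun k _ => hnn k) (hs x hx hx1)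
    have h3 : 0 ≤ (1 - x) ^ α := Real.rpow_nonneg (by linarith) _
    linarith
  · intro x hx hx1
    simp only [Polynomial.eval_finsetSum, Polynomial.eval_mul, Polynomial.eval_C,
      Polynomial.eval_pow, Polynomial.eval_X]
    exact (hs x hx hx1).tendsto_sum_nat

lemma lim_stable {α x : ℝ} (h0 : 0 < α) (hx : 0 < x) :
    Tendsto (fun n : ℕ => (1 - (1 - Real.exp (-((n : ℝ) + 1) ^ (-(1 / α)) * x)) ^ α) ^ n) atTop
      (𝓝 (Real.exp (-x ^ α))) := by
  have hu : Tendsto (fun n : ℕ => ((n : ℝ) + 1) ^ (-(1 / α)) * x) atTop (𝓝[≠] 0) := by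
    rw [tendsto_nhdsWithin_iff]
    refine ⟨?_, Eventually.of_forall fun n => ?_⟩
    · have h1 : Tendsto (fun n : ℕ => (n : ℝ) + 1) atTop atTop :=
        tendsto_atTop_add_const_right _ _ tendsto_natCast_atTop_atTop
      have := ((tendsto_rpow_neg_atTop (show 0 < 1 / α by positivity)).comp h1).mul_const x
      simpa using this
    · have : 0 < ((n : ℝ) + 1) ^ (-(1 / α)) * x := by positivity
      exact this.ne'
  have hd : HasDerivAt (fun y : ℝ => 1 - Real.exp (-y)) 1 0 := by
    have := ((hasDerivAt_id (0:ℝ)).neg.exp).const_sub 1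
    simpa using this
  have hs := hd.tendsto_slope_zero.comp hu
  have h2 := ((hs.rpow_const (p := α) (Or.inl one_ne_zero)).const_mul (x ^ α))
  have hn : Tendsto (fun n : ℕ => (n : ℝ) / (n + 1)) atTop (𝓝 1) :=
    tendsto_natCast_div_add_atTop 1
  have h3 := (hn.mul h2).neg
  refine (Real.tendsto_one_add_pow_exp_of_tendsto
    (g := fun n : ℕ => -(1 - Real.exp (-((n : ℝ) + 1) ^ (-(1 / α)) * x)) ^ α)
    (t := -x ^ α) ?_).congr fun n => by rw [← sub_eq_add_neg]
  convert h3 using 1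
  · ext n
    simp only [Function.comp, zero_add, neg_zero, Real.exp_zero, sub_self, sub_zero, smul_eq_mul]
    have hv : 0 < ((n : ℝ) + 1) ^ (-(1 / α)) := by positivity
    have h1e : 0 ≤ 1 - Real.exp (-((n : ℝ) + 1) ^ (-(1 / α)) * x) := by
      rw [sub_nonneg, Real.exp_le_one_iff, neg_mul]
      have := mul_pos hv hx
      linarith
    rw [← neg_mul (((n : ℝ) + 1) ^ (-(1 / α))) x, Real.mul_rpow (by positivity) h1e, Real.inv_rpow (by positivity),
      Real.mul_rpow hv.le hx.le, ← Real.rpow_mul (by positivity),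
      show -(1 / α) * α = -1 by field_simp, Real.rpow_neg_one]
    have : 0 < x ^ α := by positivity
    field_simp
  · simp

lemma good_damped {p δ : ℝ} (hp1 : 0 < p) (hp2 : p < 2) (hδ : 0 < δ) :
    Good (fun z => Real.exp (-|z| ^ p) * Real.exp (-δ * z ^ 2)) := by
  obtain ⟨q, hq, hqb, hql⟩ := exists_poly (α := p / 2) (by linarith) (by linarith)
  have hE : ∀ h : ℝ, 0 < h → ∀ z : ℝ, z ≠ 0 → Real.exp (-h * z ^ 2) < 1 := by
    intro h hh z hz
    rw [Real.exp_lt_one_iff]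
    have : 0 < h * z ^ 2 := by positivity
    linarith
  have step : ∀ (n : ℕ) (h : ℝ), 0 < h →
      Good (fun z => (1 - (1 - Real.exp (-h * z ^ 2)) ^ (p / 2)) ^ n * Real.exp (-δ * z ^ 2)) := by
    intro n h hh
    refine Good.lim (F := fun N z => ((q N) ^ n).eval (Real.exp (-h * z ^ 2))
      * Real.exp (-δ * z ^ 2)) (fun N => Good.poly _ (coeff_pow_nonneg (hq N) n) hh hδ)
      (fun N => ?_) (integrable_exp_neg_mul_sq hδ) (fun N z hz => ?_) (fun z hz => ?_)
    · have : Continuous (fun z : ℝ => ((q N) ^ n).eval (Real.exp (-h * z ^ 2))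
        * Real.exp (-δ * z ^ 2)) :=
        ((Polynomial.continuous _).comp (by fun_prop)).mul (by fun_prop)
      exact this.aestronglyMeasurable
    · obtain ⟨h1, h2⟩ := hqb N _ (Real.exp_pos _) (hE h hh z hz)
      rw [Polynomial.eval_pow, abs_mul, Real.abs_exp, abs_of_nonneg (pow_nonneg h1 n)]
      exact mul_le_of_le_one_left (Real.exp_pos _).le (pow_le_one₀ h1 h2)
    · simp only [Polynomial.eval_pow]
      exact ((hql _ (Real.exp_pos _) (hE h hh z hz)).pow n).mul_const _
  refine Good.lim (F := fun n z => (1 - (1 - Real.exp (-((n : ℝ) + 1) ^ (-(1 / (p / 2))) * z ^ 2))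
      ^ (p / 2)) ^ n * Real.exp (-δ * z ^ 2)) (fun n => step n _ (by positivity))
      (fun n => ?_) (integrable_exp_neg_mul_sq hδ) (fun n z hz => ?_) (fun z hz => ?_)
  · exact Measurable.aestronglyMeasurable (by fun_prop)
  · have h1 := hE (((n : ℝ) + 1) ^ (-(1 / (p / 2)))) (by positivity) z hz
    have h2 := Real.exp_pos (-((n : ℝ) + 1) ^ (-(1 / (p / 2))) * z ^ 2)
    set y := Real.exp (-((n : ℝ) + 1) ^ (-(1 / (p / 2))) * z ^ 2)
    have h3 : 0 ≤ (1 - y) ^ (p / 2) := Real.rpow_nonneg (by linarith) _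
    have h4 : (1 - y) ^ (p / 2) ≤ 1 := Real.rpow_le_one (by linarith) (by linarith) (by linarith)
    rw [abs_mul, Real.abs_exp, abs_of_nonneg (pow_nonneg (by linarith) n)]
    exact mul_le_of_le_one_left (Real.exp_pos _).le (pow_le_one₀ (by linarith) (by linarith))
  · have := lim_stable (α := p / 2) (x := z ^ 2) (by linarith) (by positivity)
    have e : (z ^ 2) ^ (p / 2) = |z| ^ p := by
      rw [← sq_abs, ← Real.rpow_natCast, ← Real.rpow_mul (abs_nonneg _)]
      congr 1
      push_cast
      ring
    rw [e] at this
    exact this.mul_const _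

lemma integrable_aux {p : ℝ} (hp : 0 < p) {s : ℝ} (hs : -1 < s) :
    Integrable (fun z : ℝ => |z| ^ s * Real.exp (-|z| ^ p)) := by
  have h1 : IntegrableOn (fun z : ℝ => |z| ^ s * Real.exp (-|z| ^ p)) (Set.Ioi 0) :=
    (integrableOn_rpow_mul_exp_neg_rpow hs hp).congr_fun
      (fun z hz => by simp only [abs_of_pos (Set.mem_Ioi.1 hz)]) measurableSet_Ioi
  have h2 : IntegrableOn (fun z : ℝ => |z| ^ s * Real.exp (-|z| ^ p)) (Set.Iic 0) := by
    rw [integrableOn_Iic_iff_integrableOn_Iio]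
    have h3 : IntegrableOn (fun z : ℝ => |z| ^ s * Real.exp (-|z| ^ p)) (Set.Ioi (-0)) := by
      simpa using h1
    simpa using h3.comp_neg_Iio
  have := h2.union h1
  rwa [Set.Iic_union_Ioi, integrableOn_univ] at this

lemma integrable_exp_abs {p : ℝ} (hp : 0 < p) :
    Integrable (fun z : ℝ => Real.exp (-|z| ^ p)) := by
  simpa using integrable_aux hp (s := 0) (by norm_num)

lemma integrable_abs_mul_exp {p : ℝ} (hp : 0 < p) :
    Integrable (fun z : ℝ => |z| * Real.exp (-|z| ^ p)) := by
  simpa using integrable_aux hp (s := 1) (by norm_num)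

lemma good_main {p : ℝ} (hp1 : 0 < p) (hp2 : p < 2) : Good (fun z => Real.exp (-|z| ^ p)) := by
  refine Good.lim (F := fun n z => Real.exp (-|z| ^ p) * Real.exp (-(1 / ((n : ℝ) + 1)) * z ^ 2))
    (fun n => good_damped hp1 hp2 (by positivity)) (fun n => ?_) (integrable_exp_abs hp1)
    (fun n z hz => ?_) (fun z hz => ?_)
  · exact Measurable.aestronglyMeasurable (by fun_prop)
  · rw [abs_mul, Real.abs_exp, Real.abs_exp]
    refine mul_le_of_le_one_right (Real.exp_pos _).le ?_
    rw [Real.exp_le_one_iff]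
    have : 0 < (1 / ((n : ℝ) + 1)) * z ^ 2 := by positivity
    linarith
  · have h1 : Tendsto (fun n : ℕ => 1 / ((n : ℝ) + 1)) atTop (𝓝 0) :=
      tendsto_one_div_add_atTop_nhds_zero_nat
    have h2 := ((Real.continuous_exp.tendsto _).comp (h1.neg.mul_const (z ^ 2))).const_mul
      (Real.exp (-|z| ^ p))
    simpa using h2

lemma gammaP_differentiable {p : ℝ} (hp : 0 < p) : Differentiable ℝ (gammaP p) := by
  intro t
  have := (hasDerivAt_integral_of_dominated_loc_of_deriv_le (μ := volume) (x₀ := t)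
    (F := fun t z => Real.exp (-|z| ^ p) * Real.cos (t * z))
    (F' := fun t z => Real.exp (-|z| ^ p) * (-Real.sin (t * z) * z))
    (bound := fun z => |z| * Real.exp (-|z| ^ p)) (s := Set.univ) univ_mem
    (Eventually.of_forall fun t => (integrable_mul_cos (integrable_exp_abs hp) t).1)
    (integrable_mul_cos (integrable_exp_abs hp) t)
    (Measurable.aestronglyMeasurable (by fun_prop))
    (Eventually.of_forall fun z t _ => ?_) (integrable_abs_mul_exp hp)
    (Eventually.of_forall fun z t _ => ?_)).2
  · exact this.differentiableAt
  · rw [norm_mul, norm_mul, norm_neg, Real.norm_eq_abs, Real.norm_eq_abs, Real.norm_eq_abs,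
      Real.abs_exp, mul_comm |z|]
    have := Real.abs_sin_le_one (t * z)
    gcongr
    exact mul_le_of_le_one_left (abs_nonneg _) this
  · have := ((hasDerivAt_mul_const z (x := t)).cos).const_mul (Real.exp (-|z| ^ p))
    exact this

lemma gammaP_zero_pos {p : ℝ} (hp : 0 < p) : 0 < gammaP p 0 := by
  have : gammaP p 0 = ∫ z : ℝ, Real.exp (-|z| ^ p) := by simp [gammaP]
  rw [this]
  exact integral_exp_pos (integrable_exp_abs hp)

lemma gammaP_abs (p t : ℝ) : gammaP p |t| = gammaP p t := by
  rcases abs_choice t with h | h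
  · rw [h]
  · rw [h]; simp [gammaP]

lemma gammaP_pos {p : ℝ} (hp1 : 0 < p) (hp2 : p < 2) (t : ℝ) : 0 < gammaP p t := by
  obtain ⟨hn, hc⟩ := good_main hp1 hp2
  change ∀ t, 0 ≤ gammaP p t at hn
  change ∀ c : ℝ, ConvexOn ℝ (Set.Ici 0)
    (fun t => Real.exp (c * t) * gammaP p (Real.sqrt t)) at hc
  rw [← gammaP_abs]
  refine (hn _).lt_of_ne fun h0 => ?_
  have h0' := gammaP_zero_pos hp1
  have ht : 0 < |t| := by
    rcases (abs_nonneg t).lt_or_eq with h | h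
    · exact h
    · rw [← h] at h0; linarith
  set b := |t| ^ 2 with hb
  have hbs : √b = |t| := Real.sqrt_sq (abs_nonneg t)
  have hbp : 0 < b := by positivity
  have hz : ∀ l : ℝ, 0 < l → l < 1 → gammaP p (√(l * b)) = 0 := by
    intro l hl hl1
    refine le_antisymm ?_ (hn _)
    have hle : ∀ c : ℝ, 
        gammaP p (√(l * b)) ≤ Real.exp (-(c * (l * b))) * ((1 - l) * gammaP p 0) := by
      intro c
      have := (hc c).2 (show (0:ℝ) ∈ Set.Ici 0 from Set.mem_Ici.2 le_rfl) (show b ∈ Set.Ici 0 from hbp.le)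
        (show 0 ≤ 1 - l by linarith) hl.le (by ring)
      simp only [smul_eq_mul, mul_zero, zero_add, Real.sqrt_zero, Real.exp_zero, one_mul, hbs,
        ← h0, add_zero] at this
      rw [Real.exp_neg]
      rw [inv_mul_eq_div, le_div_iff₀ (Real.exp_pos _), mul_comm]
      exact this
    have hlim : Tendsto (fun c : ℝ => Real.exp (-(c * (l * b))) * ((1 - l) * gammaP p 0)) atTop
        (𝓝 0) := by
      have h1 : Tendsto (fun c : ℝ => c * (l * b)) atTop atTop :=
        tendsto_id.atTop_mul_const (by positivity)
      have := (Real.tendsto_exp_neg_atTop_nhds_zero.comp h1).mul_const ((1 - l) * gammaP p 0)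
      simpa using this
    exact ge_of_tendsto' hlim hle
  have hcont : Continuous (gammaP p) := (gammaP_differentiable hp1).continuous
  have h1 : Tendsto (fun l : ℝ => gammaP p (√(l * b))) (𝓝[>] 0) (𝓝 (gammaP p 0)) := by
    have : Continuous (fun l : ℝ => gammaP p (√(l * b))) := hcont.comp (by fun_prop)
    have := (this.tendsto 0).mono_left (nhdsWithin_le_nhds (s := Set.Ioi 0))
    simpa using this
  have h2 : Tendsto (fun l : ℝ => gammaP p (√(l * b))) (𝓝[>] 0) (𝓝 0) := by
    refine tendsto_const_nhds.congr' ?_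
    filter_upwards [Ioo_mem_nhdsGT (show (0:ℝ) < 1 by norm_num)] with l hl
    exact (hz l hl.1 hl.2).symm
  have := tendsto_nhds_unique h1 h2
  linarith

lemma gammaP_logconvex {p : ℝ} (hp1 : 0 < p) (hp2 : p < 2) :
    ConvexOn ℝ (Set.Ici 0) (fun t => Real.log (gammaP p (Real.sqrt t))) := by
  have hc : ∀ c : ℝ, ConvexOn ℝ (Set.Ici 0)
    (fun t => Real.exp (c * t) * gammaP p (Real.sqrt t)) := (good_main hp1 hp2).2
  have hpos := gammaP_pos hp1 hp2
  refine LinearOrder.convexOn_of_lt (convex_Ici _) ?_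
  intro x hx y hy hxy a b ha hb hab
  set A := Real.log (gammaP p √x)
  set B := Real.log (gammaP p √y)
  set c := (A - B) / (y - x) with hcdef
  have hyx : 0 < y - x := by linarith
  have hcc : c * y + B = c * x + A := by
    rw [hcdef]; field_simp; ring
  have hA : gammaP p √x = Real.exp A := (Real.exp_log (hpos _)).symm
  have hB : gammaP p √y = Real.exp B := (Real.exp_log (hpos _)).symm
  have := (hc c).2 hx hy ha.le hb.le hab
  simp only [smul_eq_mul] at this ⊢
  rw [hA, hB, ← Real.exp_add, ← Real.exp_add, hcc, ← add_mul, hab, one_mul] at this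
  rw [← Real.exp_log (hpos (√(a * x + b * y))), ← Real.exp_add, Real.exp_le_exp] at this
  have e : c * x + A = a * (c * x + A) + b * (c * y + B) := by
    rw [hcc, ← add_mul, hab, one_mul]
  rw [e] at this
  linarith

theorem statement17 (p : ℝ) (hp1 : 0 < p) (hp2 : p < 2) :
    (∀ t, 0 < gammaP p t)
    ∧ ConvexOn ℝ (Set.Ioi 0) (fun t => Real.log (gammaP p (Real.sqrt t)))
    ∧ MonotoneOn (fun t => deriv (gammaP p) t / (t * gammaP p t)) (Set.Ioi 0)
    ∧ (∀ k m : ℕ, 0 < k → k < m → ∀ t : ℝ, 0 < t →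
        gammaP p (t / Real.sqrt m) ^ m
          ≤ gammaP p (t / Real.sqrt k) ^ k * gammaP p 0 ^ (m - k)) := by
  have hpos := gammaP_pos hp1 hp2
  have hconv := gammaP_logconvex hp1 hp2
  have hconv' := hconv.subset Set.Ioi_subset_Ici_self (convex_Ioi (0:ℝ))
  refine ⟨hpos, hconv', ?_, ?_⟩
  · have hd : ∀ u ∈ Set.Ioi (0:ℝ), HasDerivAt (fun t => Real.log (gammaP p (Real.sqrt t)))
        (deriv (gammaP p) √u * (1 / (2 * √u)) / gammaP p √u) u := by
      intro u hu
      exact (((gammaP_differentiable hp1) _).hasDerivAt.comp u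
        (Real.hasDerivAt_sqrt (ne_of_gt hu))).log (hpos _).ne'
    have hm := hconv'.monotoneOn_deriv fun u hu => (hd u hu).differentiableAt
    intro s hs t ht hst
    have hs' : 0 < s := hs
    have ht' : 0 < t := ht
    have h := hm (show s ^ 2 ∈ Set.Ioi (0:ℝ) from pow_pos hs' 2)
      (show t ^ 2 ∈ Set.Ioi (0:ℝ) from pow_pos ht' 2) (by gcongr)
    rw [(hd _ (pow_pos hs' 2)).deriv, (hd _ (pow_pos ht' 2)).deriv, Real.sqrt_sq hs'.le,
      Real.sqrt_sq ht'.le] at h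
    have e : ∀ r : ℝ, 0 < r → deriv (gammaP p) r / (r * gammaP p r)
        = 2 * (deriv (gammaP p) r * (1 / (2 * r)) / gammaP p r) := by
      intro r hr
      have := (hpos r).ne'
      field_simp
    simp only [e s hs', e t ht']
    linarith
  · intro k m hk hkm t ht
    have hk' : (0:ℝ) < k := by exact_mod_cast hk
    have hkm' : (k:ℝ) < m := by exact_mod_cast hkm
    have hm' : (0:ℝ) < m := hk'.trans hkm'
    have h := hconv.2 (show t ^ 2 / (k:ℝ) ∈ Set.Ici 0 from Set.mem_Ici.2 (by positivity))
      (show (0:ℝ) ∈ Set.Ici 0 from Set.mem_Ici.2 le_rfl) (show (0:ℝ) ≤ k / m by positivity)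
      (show (0:ℝ) ≤ 1 - k / m by rw [sub_nonneg, div_le_one hm']; exact hkm'.le) (by ring)
    simp only [smul_eq_mul, mul_zero, add_zero, Real.sqrt_zero] at h
    rw [show (k / m : ℝ) * (t ^ 2 / k) = t ^ 2 / m by field_simp,
      Real.sqrt_div (sq_nonneg t), Real.sqrt_div (sq_nonneg t), Real.sqrt_sq ht.le] at h
    have h2 : m * Real.log (gammaP p (t / √m)) ≤ k * Real.log (gammaP p (t / √k))
        + (m - k) * Real.log (gammaP p 0) := by
      have := mul_le_mul_of_nonneg_left h hm'.le
      refine this.trans_eq ?_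
      field_simp
    rw [← Real.log_le_log_iff (pow_pos (hpos _) _)
      (mul_pos (pow_pos (hpos _) _) (pow_pos (hpos _) _)),
      Real.log_mul (pow_pos (hpos _) _).ne' (pow_pos (hpos _) _).ne', Real.log_pow, Real.log_pow,
      Real.log_pow, Nat.cast_sub hkm.le]
    exact h2

end
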